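/- arXiv:solv-int/9907001 — 4 statements merged into one kernel-verified Lean document; each statement's English description precedes it below -/
import Mathlib

section
/- Let w, f, g, φ, ψ : ℝ → ℝ with w, f, φ, ψ differentiable on ℝ, and suppose f(x)·w'(x) = −g(x)·w(x) for all x. Define the operator n by (n φ)(x) = f(x)φ'(x) + ((f'(x) − g(x))/2)·φ(x). Assume that the functions x ↦ w(x)·φ(x)·(n ψ)(x) and x ↦ w(x)·(n φ)(x)·ψ(x) are integrable on ℝ, and that f(x)·w(x)·φ(x)·ψ(x) → 0 as x → +∞ and as x → −∞. Then ∫_ℝ w(x)·φ(x)·(n ψ)(x) dx = − ∫_ℝ w(x)·(n φ)(x)·ψ(x) dx; that is, the operator n is skew-adjoint with respect to the inner product (φ, ψ)₂ = ∫_ℝ w(x)φ(x)ψ(x) dx. -/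
open MeasureTheory Filter

/-- The Adler–van Moerbeke operator `n = f·(d/dx) + (f' − g)/2` associated to the
weight `w = e^{−2V}` with `2V' = g/f` (equivalently `f·w' = −g·w`). -/
noncomputable def nOp (f g φ : ℝ → ℝ) : ℝ → ℝ :=
  fun x => f x * deriv φ x + ((deriv f x - g x) / 2) * φ x

/-- The operator `n` is skew-adjoint with respect to the inner product
`(φ, ψ)₂ = ∫ w φ ψ`. -/
theorem nOp_skew_adjoint (w f g φ ψ : ℝ → ℝ)
    (hw : Differentiable ℝ w) (hf : Differentiable ℝ f)
    (hφ : Differentiable ℝ φ) (hψ : Differentiable ℝ ψ)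
    (hweight : ∀ x, f x * deriv w x = - (g x * w x))
    (hint1 : Integrable (fun x => w x * φ x * nOp f g ψ x))
    (hint2 : Integrable (fun x => w x * nOp f g φ x * ψ x))
    (htop : Tendsto (fun x => f x * w x * φ x * ψ x) atTop (nhds 0))
    (hbot : Tendsto (fun x => f x * w x * φ x * ψ x) atBot (nhds 0)) :
    ∫ x : ℝ, w x * φ x * nOp f g ψ x = - ∫ x : ℝ, w x * nOp f g φ x * ψ x := by
  have hd : ∀ x, HasDerivAt (fun x => f x * w x * φ x * ψ x)
      (w x * φ x * nOp f g ψ x + w x * nOp f g φ x * ψ x) x := by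
    intro x
    have h := (((hf x).hasDerivAt.mul (hw x).hasDerivAt).mul (hφ x).hasDerivAt).mul
      (hψ x).hasDerivAt
    refine HasDerivAt.congr_deriv h ?_
    simp only [nOp, Pi.mul_apply]
    linear_combination (φ x * ψ x) * hweight x
  have h := integral_of_hasDerivAt_of_tendsto hd (hint1.add hint2) hbot htop
  rw [integral_add hint1 hint2] at h
  linarith
end

section
/- Let w, f, g, φ, ψ : ℝ → ℝ with w, f, φ, ψ differentiable on ℝ, and suppose f(x)·w'(x) = −g(x)·w(x) for all x. Define (n φ)(x) = f(x)φ'(x) + ((f'(x) − g(x))/2)·φ(x). Assume the functions x ↦ w(x)·φ(x)·(n ψ)(x), x ↦ w(x)·(n φ)(x)·ψ(x), and x ↦ f(x)·w(x)·(φ(x)ψ'(x) − φ'(x)ψ(x)) are integrable on ℝ, and that f(x)·w(x)·φ(x)·ψ(x) → 0 as x → ±∞. Then ∫_ℝ w(x)·φ(x)·(n ψ)(x) dx = (1/2)∫_ℝ f(x)·w(x)·(φ(x)ψ'(x) − φ'(x)ψ(x)) dx. In other words, (φ, n ψ)₂ equals the β = 4 skew inner product of φ and ψ taken with respect to the weight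 f·w. -/
open MeasureTheory Filter

/-- `(φ, n ψ)₂` equals the β = 4 skew inner product of `φ` and `ψ` with respect to
the weight `f·w`. -/
theorem nOp_inner_eq_skew4 (w f g φ ψ : ℝ → ℝ)
    (hw : Differentiable ℝ w) (hf : Differentiable ℝ f)
    (hφ : Differentiable ℝ φ) (hψ : Differentiable ℝ ψ)
    (hweight : ∀ x, f x * deriv w x = - (g x * w x))
    (hint1 : Integrable (fun x => w x * φ x * nOp f g ψ x))
    (hint2 : Integrable (fun x => w x * nOp f g φ x * ψ x))
    (hint3 : Integrable (fun x => f x * w x * (φ x * deriv ψ x - deriv φ x * ψ x)))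
    (htop : Tendsto (fun x => f x * w x * φ x * ψ x) atTop (nhds 0))
    (hbot : Tendsto (fun x => f x * w x * φ x * ψ x) atBot (nhds 0)) :
    ∫ x : ℝ, w x * φ x * nOp f g ψ x
      = (1 / 2) * ∫ x : ℝ, f x * w x * (φ x * deriv ψ x - deriv φ x * ψ x) := by
  have hsum : ∫ x : ℝ, (w x * φ x * nOp f g ψ x + w x * nOp f g φ x * ψ x) = 0 - 0 := by
    refine integral_of_hasDerivAt_of_tendsto (fun x => ?_) (hint1.add hint2) hbot htop
    have h := (((hf x).hasDerivAt.mul (hw x).hasDerivAt).mul (hφ x).hasDerivAt).mul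
      (hψ x).hasDerivAt
    refine h.congr_deriv ?_
    simp only [nOp, Pi.mul_apply]
    linear_combination (φ x * ψ x) * hweight x
  have hdiff : ∫ x : ℝ, f x * w x * (φ x * deriv ψ x - deriv φ x * ψ x)
      = ∫ x : ℝ, (w x * φ x * nOp f g ψ x - w x * nOp f g φ x * ψ x) := by
    congr 1
    funext x
    simp only [nOp]
    ring
  rw [integral_add hint1 hint2] at hsum
  rw [hdiff, integral_sub hint1 hint2]
  linarith
end

section
/- Define q_{2m}(x) = p_{2m}(x) and q_{2m+1}(x) = p_{2m+1}(x) − m·p_{2m−1}(x) (with p_{−1} = 0), where p_k are the monic Hermite polynomials. Then the family {q_j} is skew orthogonal with respect to the β = 1 skew inner product with weight e^{−x²/2} on ℝ: for all natural numbers m, n one has ⟨q_{2m}, q_{2n}⟩₁ = 0, ⟨q_{2m+1}, q_{2n+1}⟩₁ = 0, and ⟨q_{2m}, q_{2n+1}⟩₁ = 0 if m ≠ n, while ⟨q_{2m}, q_{2m+1}⟩₁ = 2^{−2m} √π (2m)!. -/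
open MeasureTheory

/-- The physicists' Hermite polynomials. -/
noncomputable def hermiteH : ℕ → ℝ → ℝ
  | 0, _ => 1
  | 1, x => 2 * x
  | (n + 2), x => 2 * x * hermiteH (n + 1) x - 2 * (n + 1) * hermiteH n x

/-- The monic Hermite polynomials `p_k = 2^{−k} H_k`. -/
noncomputable def hermiteP (k : ℕ) (x : ℝ) : ℝ := hermiteH k x / 2 ^ k

/-- The skew orthogonal candidates: `q_{2m} = p_{2m}`, `q_{2m+1} = p_{2m+1} − m p_{2m−1}`. -/
noncomputable def qGOE (j : ℕ) (x : ℝ) : ℝ :=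
  if j % 2 = 0 then hermiteP j x
  else hermiteP j x - (j / 2 : ℕ) * hermiteP (j - 2) x

/-- The β = 1 skew inner product with weight `e^{−x²/2}` on ℝ. -/
noncomputable def sip1 (f g : ℝ → ℝ) : ℝ :=
  (1 / 2) * ∫ x : ℝ, ∫ y : ℝ,
    Real.exp (-x ^ 2 / 2) * Real.exp (-y ^ 2 / 2) * Real.sign (y - x) * f x * g y

lemma hP_poly (k : ℕ) : ∃ P : Polynomial ℝ, ∀ x, hermiteP k x = P.eval x := by
  suffices h : ∃ P : Polynomial ℝ, ∀ x, hermiteH k x = P.eval x by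
    obtain ⟨P, hP⟩ := h
    refine ⟨P * Polynomial.C ((2 ^ k)⁻¹), fun x => ?_⟩
    rw [hermiteP, hP, Polynomial.eval_mul, Polynomial.eval_C, div_eq_mul_inv]
  induction k using Nat.twoStepInduction with
  | zero => exact ⟨1, fun x => by simp [hermiteH]⟩
  | one => exact ⟨Polynomial.C 2 * Polynomial.X, fun x => by simp [hermiteH]⟩
  | more n h1 h2 =>
    obtain ⟨P, hP⟩ := h1
    obtain ⟨Q, hQ⟩ := h2
    refine ⟨Polynomial.C 2 * Polynomial.X * Q - Polynomial.C (2 * ((n:ℝ) + 1)) * P, fun x => ?_⟩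
    simp only [hermiteH, hP, hQ, Polynomial.eval_sub, Polynomial.eval_mul, Polynomial.eval_C,
      Polynomial.eval_X]

lemma hP_rec (n : ℕ) (x : ℝ) :
    hermiteP (n + 1) x = x * hermiteP n x - n / 2 * hermiteP (n - 1) x := by
  cases n with
  | zero => simp [hermiteP, hermiteH]
  | succ n =>
    simp only [hermiteP, hermiteH, Nat.add_sub_cancel, pow_succ]
    push_cast
    field_simp

lemma hP_deriv (n : ℕ) (x : ℝ) : HasDerivAt (hermiteP n) (n * hermiteP (n - 1) x) x := by
  induction n using Nat.strong_induction_on with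
  | _ n ih =>
    cases n with
    | zero =>
      have : hermiteP 0 = fun _ => 1 := by funext x; simp [hermiteP, hermiteH]
      rw [this]
      simpa using hasDerivAt_const x (1:ℝ)
    | succ n =>
      have e : hermiteP (n + 1) = fun x => x * hermiteP n x - n / 2 * hermiteP (n - 1) x :=
        funext (hP_rec n)
      have h1 := ih n (by omega)
      have h2 := ih (n - 1) (by omega)
      rw [e]
      refine (((hasDerivAt_id x).mul h1).sub (h2.const_mul ((n:ℝ) / 2))).congr_deriv ?_
      cases n with
      | zero => simp
      | succ n =>
        have r := hP_rec n x
        simp only [Nat.add_sub_cancel, id] at *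
        push_cast
        rw [r]
        ring

lemma hP_neg (n : ℕ) (x : ℝ) : hermiteP n (-x) = (-1) ^ n * hermiteP n x := by
  suffices h : hermiteH n (-x) = (-1) ^ n * hermiteH n x by
    rw [hermiteP, hermiteP, h]; ring
  induction n using Nat.twoStepInduction with
  | zero => simp [hermiteH]
  | one => simp [hermiteH]
  | more n h1 h2 => simp only [hermiteH, h1, h2]; ring

lemma poly_int (b : ℝ) (hb : 0 < b) (P : Polynomial ℝ) :
    Integrable (fun x : ℝ => P.eval x * Real.exp (-b * x ^ 2)) := by
  induction P using Polynomial.induction_on' with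
  | add p q hp hq => 
    refine (hp.add hq).congr (Filter.Eventually.of_forall fun x => ?_)
    simp [add_mul]
  | monomial n a =>
    have h := integrable_rpow_mul_exp_neg_mul_sq hb (s := (n:ℝ)) (by
      have : (0:ℝ) ≤ n := n.cast_nonneg
      linarith)
    refine (h.const_mul a).congr (Filter.Eventually.of_forall fun x => ?_)
    simp [Real.rpow_natCast, mul_assoc]

lemma exp_deriv (b x : ℝ) :
    HasDerivAt (fun x : ℝ => Real.exp (-b * x ^ 2)) (-2 * b * x * Real.exp (-b * x ^ 2)) x := by
  have := ((hasDerivAt_pow 2 x).const_mul (-b)).exp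
  refine this.congr_deriv ?_
  simp; ring

/-- `∫ p_m p_n e^{-x²}`. -/
noncomputable def II (m n : ℕ) : ℝ :=
  ∫ x : ℝ, hermiteP m x * hermiteP n x * Real.exp (-1 * x ^ 2)

lemma II_int (m n : ℕ) :
    Integrable (fun x : ℝ => hermiteP m x * hermiteP n x * Real.exp (-1 * x ^ 2)) := by
  obtain ⟨P, hP⟩ := hP_poly m
  obtain ⟨Q, hQ⟩ := hP_poly n
  simpa [hP, hQ] using poly_int 1 one_pos (P * Q)

lemma II_comm (m n : ℕ) : II m n = II n m := by
  unfold II; congr 1; funext x; ring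

lemma II_step (m n : ℕ) : II m (n + 1) = m / 2 * II (m - 1) n := by
  have hd : ∀ x, HasDerivAt (fun x : ℝ => hermiteP m x * hermiteP n x * Real.exp (-1 * x ^ 2))
      (m * (hermiteP (m - 1) x * hermiteP n x * Real.exp (-1 * x ^ 2))
        - 2 * (hermiteP m x * hermiteP (n + 1) x * Real.exp (-1 * x ^ 2))) x := fun x => by
    refine (((hP_deriv m x).mul (hP_deriv n x)).mul (exp_deriv 1 x)).congr_deriv ?_
    rw [hP_rec n x]
    simp only [Pi.mul_apply]
    ring
  have h := integral_eq_zero_of_hasDerivAt_of_integrable hd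
    (((II_int (m - 1) n).const_mul _).sub ((II_int m (n + 1)).const_mul _)) (II_int m n)
  rw [integral_sub ((II_int (m - 1) n).const_mul _) ((II_int m (n + 1)).const_mul _),
    integral_const_mul, integral_const_mul] at h
  unfold II
  linarith

lemma II_ne (m n : ℕ) (h : m ≠ n) : II m n = 0 := by
  induction m generalizing n with
  | zero =>
    obtain ⟨k, rfl⟩ : ∃ k, n = k + 1 := ⟨n - 1, by omega⟩
    simp [II_step]
  | succ m ih =>
    cases n with
    | zero => rw [II_comm, II_step]; simp
    | succ n => rw [II_step, Nat.add_sub_cancel, ih n (by omega), mul_zero]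

lemma II_self (n : ℕ) : II n n = Real.sqrt Real.pi * (Nat.factorial n) / 2 ^ n := by
  induction n with
  | zero =>
    have := integral_gaussian 1
    simp only [div_one] at this
    simp [II, hermiteP, hermiteH]
    simpa using this
  | succ n ih =>
    rw [II_step, Nat.add_sub_cancel, ih, Nat.factorial_succ, pow_succ]
    push_cast
    field_simp

lemma half_int (n : ℕ) : Integrable (fun x : ℝ => hermiteP n x * Real.exp (-(1/2) * x ^ 2)) := by
  obtain ⟨P, hP⟩ := hP_poly n
  simpa only [hP] using poly_int (1/2) (by norm_num) P

lemma q_even (m : ℕ) (x : ℝ) : qGOE (2 * m) x = hermiteP (2 * m) x := by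
  simp [qGOE]

lemma q_odd (m : ℕ) (x : ℝ) :
    qGOE (2 * m + 1) x = hermiteP (2 * m + 1) x - m * hermiteP (2 * m - 1) x := by
  have h1 : (2 * m + 1) % 2 = 1 := by omega
  have h2 : (2 * m + 1) / 2 = m := by omega
  have h3 : 2 * m + 1 - 2 = 2 * m - 1 := by omega
  simp [qGOE, h1, h2, h3]

lemma q_neg_even (m : ℕ) (x : ℝ) : qGOE (2 * m) (-x) = qGOE (2 * m) x := by
  simp [q_even, hP_neg, pow_mul]

lemma q_neg_odd (m : ℕ) (x : ℝ) : qGOE (2 * m + 1) (-x) = -qGOE (2 * m + 1) x := by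
  cases m with
  | zero => rw [q_odd, q_odd]; simp [hP_neg]
  | succ m =>
    have : 2 * (m + 1) - 1 = 2 * m + 1 := by omega
    simp only [q_odd, hP_neg, this, pow_succ, pow_mul]
    norm_num
    ring

lemma sip_parity (f g : ℝ → ℝ) (h : ∀ x y, f (-x) * g (-y) = f x * g y) : sip1 f g = 0 := by
  unfold sip1
  set J := ∫ x : ℝ, ∫ y : ℝ,
    Real.exp (-x ^ 2 / 2) * Real.exp (-y ^ 2 / 2) * Real.sign (y - x) * f x * g y with hJ
  have : J = -J := by
    conv_lhs => rw [hJ]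
    rw [← integral_neg_eq_self, hJ, ← integral_neg]
    congr 1; funext x
    rw [← integral_neg_eq_self, ← integral_neg]
    congr 1; funext y
    have e : Real.sign (-y - -x) = - Real.sign (y - x) := by
      rw [← Real.sign_neg]; congr 1; ring
    rw [e, neg_sq, neg_sq]
    linear_combination (-(Real.exp (-x ^ 2 / 2) * Real.exp (-y ^ 2 / 2) * Real.sign (y - x))) * h x y
  linarith

lemma inner_odd (n : ℕ) (x : ℝ) :
    ∫ y : ℝ, Real.sign (y - x) * (qGOE (2 * n + 1) y * Real.exp (-(1/2) * y ^ 2))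
      = 2 * (hermiteP (2 * n) x * Real.exp (-(1/2) * x ^ 2)) := by
  set F : ℝ → ℝ := fun y => hermiteP (2 * n) y * Real.exp (-(1/2) * y ^ 2) with hF
  set G : ℝ → ℝ := fun y => qGOE (2 * n + 1) y * Real.exp (-(1/2) * y ^ 2) with hG
  have hd : ∀ y, HasDerivAt F (-G y) y := fun y => by
    refine ((hP_deriv (2 * n) y).mul (exp_deriv (1/2) y)).congr_deriv ?_
    simp only [hG, q_odd, hP_rec (2 * n) y]
    push_cast
    ring
  have hFi : Integrable F := half_int _
  have hGi : Integrable G := by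
    refine ((half_int (2 * n + 1)).sub ((half_int (2 * n - 1)).const_mul (n:ℝ))).congr
      (Filter.Eventually.of_forall fun y => ?_)
    simp only [hG, q_odd, Pi.sub_apply]
    ring
  have t1 := tendsto_zero_of_hasDerivAt_of_integrableOn_Iic (a := x) (fun y _ => hd y)
    hGi.neg.integrableOn hFi.integrableOn
  have t2 := tendsto_zero_of_hasDerivAt_of_integrableOn_Ioi (a := x) (fun y _ => hd y)
    hGi.neg.integrableOn hFi.integrableOn
  have i1 := integral_Iic_of_hasDerivAt_of_tendsto' (a := x) (fun y _ => hd y)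
    hGi.neg.integrableOn t1
  have i2 := integral_Ioi_of_hasDerivAt_of_tendsto' (a := x) (fun y _ => hd y)
    hGi.neg.integrableOn t2
  have e1 : ∫ y in Set.Iic x, Real.sign (y - x) * G y = ∫ y in Set.Iic x, -G y := by
    rw [integral_Iic_eq_integral_Iio, integral_Iic_eq_integral_Iio]
    refine setIntegral_congr_fun measurableSet_Iio fun y hy => ?_
    rw [Real.sign_of_neg (sub_neg.2 hy)]; ring
  have e2 : ∫ y in Set.Ioi x, Real.sign (y - x) * G y = -∫ y in Set.Ioi x, -G y := by
    rw [← integral_neg]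
    refine setIntegral_congr_fun measurableSet_Ioi fun y hy => ?_
    rw [Real.sign_of_pos (sub_pos.2 hy)]; ring
  have hm : Measurable Real.sign := by
    unfold Real.sign
    exact Measurable.ite measurableSet_Iio measurable_const
      (Measurable.ite measurableSet_Ioi measurable_const measurable_const)
  have hi : Integrable (fun y => Real.sign (y - x) * G y) := by
    refine hGi.bdd_mul (c := 1) (hm.comp (measurable_id.sub_const x)).aestronglyMeasurable
      (Filter.Eventually.of_forall fun y => ?_)
    rcases Real.sign_apply_eq (y - x) with h | h | h <;> simp [h]
  rw [← intervalIntegral.integral_Iic_add_Ioi (b := x) hi.integrableOn hi.integrableOn, e1, e2,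
    i1, i2]
  ring

lemma sip_even_odd (m n : ℕ) : sip1 (qGOE (2 * m)) (qGOE (2 * n + 1)) = II (2 * m) (2 * n) := by
  unfold sip1 II
  rw [← integral_const_mul]
  congr 1; funext x
  have : (fun y : ℝ => Real.exp (-x ^ 2 / 2) * Real.exp (-y ^ 2 / 2) * Real.sign (y - x)
      * qGOE (2 * m) x * qGOE (2 * n + 1) y) = fun y => (Real.exp (-x ^ 2 / 2) * qGOE (2 * m) x) *
      (Real.sign (y - x) * (qGOE (2 * n + 1) y * Real.exp (-(1/2) * y ^ 2))) := by
    funext y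
    rw [show -y ^ 2 / 2 = -(1/2) * y ^ 2 by ring]
    ring
  rw [this, integral_const_mul, inner_odd, q_even,
    show -1 * x ^ 2 = -x ^ 2 / 2 + -(1/2) * x ^ 2 by ring, Real.exp_add]
  ring

/-- The family `{q_j}` is skew orthogonal for the β = 1 Hermite skew inner product,
with normalizations `r_m = 2^{−2m} √π (2m)!`. -/
theorem hermite_skew_orthogonal_beta1 (m n : ℕ) :
    sip1 (qGOE (2 * m)) (qGOE (2 * n)) = 0 ∧
    sip1 (qGOE (2 * m + 1)) (qGOE (2 * n + 1)) = 0 ∧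
    (m ≠ n → sip1 (qGOE (2 * m)) (qGOE (2 * n + 1)) = 0) ∧
    sip1 (qGOE (2 * m)) (qGOE (2 * m + 1))
      = Real.sqrt Real.pi * (Nat.factorial (2 * m)) / 2 ^ (2 * m) := by
  refine ⟨sip_parity _ _ fun x y => ?_, sip_parity _ _ fun x y => ?_, fun h => ?_, ?_⟩
  · rw [q_neg_even, q_neg_even]
  · rw [q_neg_odd, q_neg_odd]; ring
  · rw [sip_even_odd, II_ne _ _ (by omega)]
  · rw [sip_even_odd, II_self]
end

section
/- For every natural number k and every real x, the monic Hermite polynomials satisfy (1/2)∫_ℝ sgn(x−t)·e^{−t²/2}·p_{2k}(t) dt − (1/(k + 1/2))·(1/2)∫_ℝ sgn(x−t)·e^{−t²/2}·p_{2k+2}(t) dt = (2^{−2k}/(2k+1))·e^{−x²/2}·H_{2k+1}(x). -/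
open MeasureTheory

lemma hermite_aux_int (n : ℕ) : ∀ m : ℕ,
    Integrable (fun t : ℝ => t ^ m * (hermiteH n t * Real.exp (-t ^ 2 / 2))) := by
  have base : ∀ m : ℕ, Integrable (fun t : ℝ => t ^ m * Real.exp (-t ^ 2 / 2)) := by
    intro m
    have h := integrable_rpow_mul_exp_neg_mul_sq (b := 1 / 2) (by norm_num) (s := (m : ℝ))
      (by have := Nat.cast_nonneg (α := ℝ) m; linarith)
    refine h.congr (Filter.Eventually.of_forall fun t => ?_)
    simp only [Real.rpow_natCast]
    congr 2
    ring
  induction n using Nat.twoStepInduction with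
  | zero => intro m; simpa [hermiteH] using base m
  | one =>
    intro m
    refine ((base (m + 1)).const_mul 2).congr (Filter.Eventually.of_forall fun t => ?_)
    simp only [hermiteH]
    ring
  | more n h0 h1 =>
    intro m
    refine (((h1 (m + 1)).const_mul 2).sub ((h0 m).const_mul (2 * ((n : ℝ) + 1)))).congr
      (Filter.Eventually.of_forall fun t => ?_)
    simp only [hermiteH, Pi.sub_apply]
    ring

lemma hermite_aux_deriv (n : ℕ) (t : ℝ) :
    HasDerivAt (hermiteH (n + 1)) (2 * ((n : ℝ) + 1) * hermiteH n t) t := by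
  induction n using Nat.twoStepInduction with
  | zero =>
    have h := (hasDerivAt_id t).const_mul (2 : ℝ)
    refine (h.congr_of_eventuallyEq (Filter.Eventually.of_forall fun s => ?_)).congr_deriv ?_
    · simp [hermiteH]
    · simp [hermiteH]
  | one =>
    have h := (((hasDerivAt_id t).const_mul (2 : ℝ)).mul
      ((hasDerivAt_id t).const_mul (2 : ℝ))).sub_const (2 : ℝ)
    refine (h.congr_of_eventuallyEq (Filter.Eventually.of_forall fun s => ?_)).congr_deriv ?_
    · simp [hermiteH]
    · simp [hermiteH]; ring
  | more n h0 h1 =>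
    have h := (((hasDerivAt_id t).const_mul (2 : ℝ)).mul h1).sub
      (h0.const_mul (2 * (((n + 1 : ℕ) : ℝ) + 1)))
    refine (h.congr_of_eventuallyEq (Filter.Eventually.of_forall fun s => ?_)).congr_deriv ?_
    · simp [hermiteH]
    · simp [hermiteH]; ring

lemma hermite_aux_sign (f f' : ℝ → ℝ) (hd : ∀ t, HasDerivAt f (f' t) t)
    (hf : Integrable f) (hf' : Integrable f') (x : ℝ) :
    ∫ t : ℝ, Real.sign (x - t) * f' t = 2 * f x := by
  have hb := tendsto_zero_of_hasDerivAt_of_integrableOn_Iic (a := x) (fun t _ => hd t)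
    hf'.integrableOn hf.integrableOn
  have ht := tendsto_zero_of_hasDerivAt_of_integrableOn_Ioi (a := x) (fun t _ => hd t)
    hf'.integrableOn hf.integrableOn
  have i1 := integral_Iic_of_hasDerivAt_of_tendsto' (a := x) (fun t _ => hd t)
    hf'.integrableOn hb
  have i2 := integral_Ioi_of_hasDerivAt_of_tendsto' (a := x) (fun t _ => hd t)
    hf'.integrableOn ht
  have e1 : ∫ t in Set.Iio x, Real.sign (x - t) * f' t = ∫ t in Set.Iio x, f' t :=
    setIntegral_congr_fun measurableSet_Iio fun t ht => by
      simp only [Set.mem_Iio] at ht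
      simp [Real.sign_of_pos (sub_pos.2 ht)]
  have e2 : ∫ t in Set.Ioi x, Real.sign (x - t) * f' t = ∫ t in Set.Ioi x, - f' t :=
    setIntegral_congr_fun measurableSet_Ioi fun t ht => by
      simp only [Set.mem_Ioi] at ht
      simp [Real.sign_of_neg (sub_neg.2 ht)]
  have hi1 : IntegrableOn (fun t => Real.sign (x - t) * f' t) (Set.Iic x) := by
    rw [integrableOn_Iic_iff_integrableOn_Iio]
    refine (hf'.integrableOn (s := Set.Iio x)).congr_fun (fun t ht => ?_) measurableSet_Iio
    simp only [Set.mem_Iio] at ht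
    simp [Real.sign_of_pos (sub_pos.2 ht)]
  have hi2 : IntegrableOn (fun t => Real.sign (x - t) * f' t) (Set.Ioi x) := by
    refine (hf'.neg.integrableOn (s := Set.Ioi x)).congr_fun (fun t ht => ?_) measurableSet_Ioi
    simp only [Set.mem_Ioi] at ht
    simp [Real.sign_of_neg (sub_neg.2 ht)]
  rw [← intervalIntegral.integral_Iic_add_Ioi hi1 hi2, integral_Iic_eq_integral_Iio, e1,
    ← integral_Iic_eq_integral_Iio, e2, integral_neg, i1, i2]
  ring

lemma hermite_aux_sign_int (x : ℝ) (g : ℝ → ℝ) (hg : Integrable g) :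
    Integrable (fun t => Real.sign (x - t) * g t) := by
  refine hg.bdd_mul (c := 1) ?_ (Filter.Eventually.of_forall fun t => ?_)
  · have : Measurable Real.sign := by
      unfold Real.sign
      exact Measurable.ite measurableSet_Iio measurable_const
        (Measurable.ite measurableSet_Ioi measurable_const measurable_const)
    exact (this.comp (measurable_const.sub measurable_id)).aestronglyMeasurable
  · rcases Real.sign_apply_eq (x - t) with h | h | h <;> simp [h]

/-- The identity `Φ_{2k}(x) − (1/(k+1/2)) Φ_{2k+2}(x) = (2^{−2k}/(2k+1)) e^{−x²/2} H_{2k+1}(x)`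
for the monic Hermite polynomials. -/
theorem hermite_Phi_identity (k : ℕ) (x : ℝ) :
    (1 / 2) * (∫ t : ℝ, Real.sign (x - t) * Real.exp (-t ^ 2 / 2) * hermiteP (2 * k) t)
      - (1 / ((k : ℝ) + 1 / 2)) *
        ((1 / 2) * ∫ t : ℝ, Real.sign (x - t) * Real.exp (-t ^ 2 / 2) * hermiteP (2 * k + 2) t)
      = (1 / (2 ^ (2 * k) * (2 * (k : ℝ) + 1))) * Real.exp (-x ^ 2 / 2) *
          hermiteH (2 * k + 1) x := by
  have I0 : ∀ n, Integrable (fun t : ℝ => hermiteH n t * Real.exp (-t ^ 2 / 2)) := fun n => by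
    simpa using hermite_aux_int n 0
  have hd : ∀ t : ℝ, HasDerivAt (fun t => hermiteH (2 * k + 1) t * Real.exp (-t ^ 2 / 2))
      ((2 * (k : ℝ) + 1) * (hermiteH (2 * k) t * Real.exp (-t ^ 2 / 2))
        - (1 / 2) * (hermiteH (2 * k + 2) t * Real.exp (-t ^ 2 / 2))) t := by
    intro t
    have h2 : HasDerivAt (fun t : ℝ => -t ^ 2 / 2) (-t) t := by
      refine (((hasDerivAt_pow 2 t).neg).div_const 2).congr_deriv ?_
      norm_num
      ring
    refine ((hermite_aux_deriv (2 * k) t).mul h2.exp).congr_deriv ?_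
    simp only [hermiteH]
    push_cast
    ring
  have key := hermite_aux_sign _ _ hd (I0 _)
    (((I0 _).const_mul _).sub ((I0 _).const_mul _)) x
  have J := fun n => hermite_aux_sign_int x _ (I0 n)
  have e : ∀ n, ∫ t : ℝ, Real.sign (x - t) * Real.exp (-t ^ 2 / 2) * hermiteP n t
      = (∫ t : ℝ, Real.sign (x - t) * (hermiteH n t * Real.exp (-t ^ 2 / 2))) / 2 ^ n := by
    intro n
    rw [← integral_div]
    congr 1
    ext t
    simp only [hermiteP]
    ring
  have key2 : (2 * (k : ℝ) + 1) *
        (∫ t : ℝ, Real.sign (x - t) * (hermiteH (2 * k) t * Real.exp (-t ^ 2 / 2)))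
      - (1 / 2) * (∫ t : ℝ, Real.sign (x - t) * (hermiteH (2 * k + 2) t * Real.exp (-t ^ 2 / 2)))
      = 2 * (hermiteH (2 * k + 1) x * Real.exp (-x ^ 2 / 2)) := by
    rw [← key, ← integral_const_mul, ← integral_const_mul,
      ← integral_sub ((J _).const_mul _) ((J _).const_mul _)]
    congr 1
    ext t
    ring
  rw [e, e]
  generalize (∫ t : ℝ, Real.sign (x - t) * (hermiteH (2 * k) t * Real.exp (-t ^ 2 / 2))) = A at *
  generalize (∫ t : ℝ, Real.sign (x - t) * (hermiteH (2 * k + 2) t * Real.exp (-t ^ 2 / 2))) = B at *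
  have hk : (2 * (k : ℝ) + 1) ≠ 0 := by positivity
  have hp : (2 : ℝ) ^ (2 * k) ≠ 0 := by positivity
  have hh : (k : ℝ) + 1 / 2 = (2 * (k : ℝ) + 1) / 2 := by ring
  have hA : hermiteH (2 * k + 1) x * Real.exp (-x ^ 2 / 2)
      = ((2 * (k : ℝ) + 1) * A - (1 / 2) * B) / 2 := by linarith
  rw [mul_assoc _ (Real.exp _), mul_comm (Real.exp _), hA, hh, pow_add]
  field_simp
end
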